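/- Let r ≥ 0 be an integer and l, l' ≥ r integers. Then ∫_{−1}^{1} P^l_{rr}(z) · P^{l'}_{rr}(z) dz = 2/(2l+1) if l = l', and = 0 if l ≠ l'. -/

import Mathlib

/-!
Write `n = l - r`, `A n = (1 - X)^n (1 + X)^(n + 2r)`. Since `(1 + X)^(2r)` divides the `n`-th
derivative of `A n`, that derivative is `(1 + X)^(2r) * Q n` with `deg (Q n) ≤ n`, and away from
`z = -1` the function `legP l r` is a constant times `(1 + z)^r * Q n`. Hence the integral of
`legP l r * legP l' r` is a constant times `∫ (A n)^(n) * Q m`, and integrating by parts `n` times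
(`integral_iterate_derivative_mul`; the boundary terms vanish because `A n` vanishes to order `n`
at `±1`) turns this into `(-1)^n ∫ A n * (Q m)^(n)`. This is zero for `m < n`. For `m = n` the
factor `(Q n)^(n)` is the constant `n!` times the leading coefficient of `(A n)^(n)`, and what
remains is the Beta integral `∫ A n`, evaluated in `integral_one_sub_pow_mul_one_add_pow`.
-/


/-- The Legendre function P^l_{rr} given by the Rodrigues-type formula
P^l_{rr}(z) = ((−1)^{l−r} / (2^l (l−r)!)) · (1+z)^{−r} · d^{l−r}/dz^{l−r}[(1−z)^{l−r}(1+z)^{l+r}]. -/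
noncomputable def legP (l r : ℕ) (z : ℝ) : ℝ :=
  ((-1 : ℝ) ^ (l - r) / (2 ^ l * ((l - r).factorial : ℝ))) *
    (deriv^[l - r] (fun w : ℝ => (1 - w) ^ (l - r) * (1 + w) ^ (l + r)) z) / (1 + z) ^ r

open Polynomial

/-- Repeated integration by parts on `[-1, 1]` without boundary terms. -/
lemma integral_iterate_derivative_mul (n : ℕ) (A : ℝ[X]) (h1 : (X - C 1) ^ n ∣ A)
    (h2 : (X - C (-1)) ^ n ∣ A) (f : ℝ[X]) :
    ∫ z in (-1 : ℝ)..1, (derivative^[n] A).eval z * f.eval z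
      = (-1) ^ n * ∫ z in (-1 : ℝ)..1, A.eval z * (derivative^[n] f).eval z := by
  induction n generalizing f with
  | zero => simp
  | succ n ih =>
    have root (a : ℝ) (h : (X - C a) ^ (n + 1) ∣ A) : (derivative^[n] A).eval a = 0 := by
      have := pow_sub_dvd_iterate_derivative_of_pow_dvd n h
      rw [Nat.add_sub_cancel_left, pow_one] at this
      exact dvd_iff_isRoot.mp this
    rw [Function.iterate_succ_apply', Function.iterate_succ_apply]
    have parts := intervalIntegral.integral_deriv_mul_eq_sub (a := (-1 : ℝ)) (b := 1)
      (fun x _ => (derivative^[n] A).hasDerivAt x) (fun x _ => f.hasDerivAt x)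
      ((Polynomial.continuous _).intervalIntegrable _ _)
      ((Polynomial.continuous _).intervalIntegrable _ _)
    rw [intervalIntegral.integral_add (Continuous.intervalIntegrable (by fun_prop) _ _)
      (Continuous.intervalIntegrable (by fun_prop) _ _), root 1 h1, root (-1) h2,
      ih ((pow_dvd_pow _ n.le_succ).trans h1) ((pow_dvd_pow _ n.le_succ).trans h2)] at parts
    rw [pow_succ]
    linarith

/-- The Beta integral on `[-1, 1]` with natural exponents. -/
lemma integral_one_sub_pow_mul_one_add_pow (n k : ℕ) :
    ∫ z in (-1 : ℝ)..1, (1 - z) ^ n * (1 + z) ^ k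
      = 2 ^ (n + k + 1) * n.factorial * k.factorial / (n + k + 1).factorial := by
  induction n generalizing k with
  | zero =>
    have h (x : ℝ) : HasDerivAt (fun z : ℝ => (1 + z) ^ (k + 1) / (k + 1)) ((1 + x) ^ k) x := by
      have := (((hasDerivAt_id x).const_add 1).pow (k + 1)).div_const ((k : ℝ) + 1)
      exact this.congr_deriv (by simp; field_simp)
    have := intervalIntegral.integral_eq_sub_of_hasDerivAt (a := (-1 : ℝ)) (b := 1)
      (fun x _ => h x) (Continuous.intervalIntegrable (by fun_prop) _ _)
    simp only [pow_zero, one_mul, this, zero_add, Nat.factorial_succ]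
    push_cast
    have := Nat.factorial_ne_zero k
    field_simp
    norm_num
  | succ n ih =>
    have h1 (x : ℝ) : HasDerivAt (fun z : ℝ => (1 - z) ^ (n + 1)) (-((n + 1) * (1 - x) ^ n)) x := by
      have := ((hasDerivAt_id x).const_sub 1).pow (n + 1)
      exact this.congr_deriv (by simp)
    have h2 (x : ℝ) : HasDerivAt (fun z : ℝ => (1 + z) ^ (k + 1)) ((k + 1) * (1 + x) ^ k) x := by
      have := ((hasDerivAt_id x).const_add 1).pow (k + 1)
      exact this.congr_deriv (by simp)
    have parts := intervalIntegral.integral_deriv_mul_eq_sub (a := (-1 : ℝ)) (b := 1)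
      (fun x _ => h1 x) (fun x _ => h2 x)
      (Continuous.intervalIntegrable (by fun_prop) _ _)
      (Continuous.intervalIntegrable (by fun_prop) _ _)
    rw [intervalIntegral.integral_add (Continuous.intervalIntegrable (by fun_prop) _ _)
      (Continuous.intervalIntegrable (by fun_prop) _ _)] at parts
    have e1 : ∫ x in (-1 : ℝ)..1, -((n + 1) * (1 - x) ^ n) * (1 + x) ^ (k + 1)
        = -(n + 1) * ∫ x in (-1 : ℝ)..1, (1 - x) ^ n * (1 + x) ^ (k + 1) := by
      rw [← intervalIntegral.integral_const_mul]
      congr 1; ext x; ring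
    have e2 : ∫ x in (-1 : ℝ)..1, (1 - x) ^ (n + 1) * ((k + 1) * (1 + x) ^ k)
        = (k + 1) * ∫ x in (-1 : ℝ)..1, (1 - x) ^ (n + 1) * (1 + x) ^ k := by
      rw [← intervalIntegral.integral_const_mul]
      congr 1; ext x; ring
    rw [e1, e2, ih] at parts
    have hk : (k + 1 : ℝ) ≠ 0 := by positivity
    apply mul_left_cancel₀ hk
    rw [show n + 1 + k + 1 = n + (k + 1) + 1 by ring, Nat.factorial_succ n]
    rw [Nat.factorial_succ k] at parts
    push_cast at parts ⊢
    simp at parts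
    linear_combination parts

/-- The weight polynomial `(1 - X)^n (1 + X)^(n + 2r)` of the Rodrigues formula. -/
noncomputable def rodA (r n : ℕ) : ℝ[X] := (1 - X) ^ n * (1 + X) ^ (n + 2 * r)

lemma natDegree_one_sub_X_pow (n : ℕ) : ((1 - X : ℝ[X]) ^ n).natDegree ≤ n := by
  compute_degree

lemma natDegree_one_add_X_pow (n : ℕ) : ((1 + X : ℝ[X]) ^ n).natDegree ≤ n := by
  compute_degree

lemma coeff_top_one_sub_X_pow (n : ℕ) : ((1 - X : ℝ[X]) ^ n).coeff n = (-1) ^ n := by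
  have := coeff_pow_of_natDegree_le (p := (1 - X : ℝ[X])) (n := 1) (m := n) (by compute_degree)
  simpa [coeff_one] using this

lemma coeff_top_one_add_X_pow (n : ℕ) : ((1 + X : ℝ[X]) ^ n).coeff n = 1 := by
  have := coeff_pow_of_natDegree_le (p := (1 + X : ℝ[X])) (n := 1) (m := n) (by compute_degree)
  simpa [coeff_one] using this

lemma natDegree_rodA (r n : ℕ) : (rodA r n).natDegree ≤ n + (n + 2 * r) :=
  natDegree_mul_le_of_le (natDegree_one_sub_X_pow n) (natDegree_one_add_X_pow _)

lemma coeff_rodA (r n : ℕ) : (rodA r n).coeff (n + (n + 2 * r)) = (-1) ^ n := by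
  rw [rodA, coeff_mul_add_eq_of_natDegree_le (natDegree_one_sub_X_pow n) (natDegree_one_add_X_pow _),
    coeff_top_one_sub_X_pow, coeff_top_one_add_X_pow, mul_one]

/-- The quotient `Q` of the `n`-th derivative of `rodA r n` by `(1 + X)^(2r)`; its degree is at
most `n`, so its `n`-th derivative is constant. -/
lemma exists_rodQ (r n : ℕ) : ∃ Q : ℝ[X], derivative^[n] (rodA r n) = (1 + X) ^ (2 * r) * Q ∧
    Q.natDegree ≤ n ∧
    derivative^[n] Q = C ((-1 : ℝ) ^ n * n.factorial * (2 * (r + n)).factorial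
      / (n + 2 * r).factorial) := by
  have hd : (1 + X : ℝ[X]) ^ (2 * r) ∣ derivative^[n] (rodA r n) := by
    have : (1 + X : ℝ[X]) ^ (n + 2 * r) ∣ rodA r n := Dvd.intro_left _ rfl
    simpa using pow_sub_dvd_iterate_derivative_of_pow_dvd n this
  obtain ⟨Q, hQ⟩ := hd
  have monic : (1 + X : ℝ[X]).Monic := by
    rw [add_comm]; exact monic_X_add_C 1
  have hdeg1 : (1 + X : ℝ[X]).natDegree = 1 := by
    rw [add_comm]; exact natDegree_X_add_C 1
  have hQdeg : Q.natDegree ≤ n := by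
    by_cases h0 : Q = 0
    · simp [h0]
    have h := natDegree_iterate_derivative (rodA r n) n
    rw [hQ, (monic.pow _).natDegree_mul' h0, monic.natDegree_pow, hdeg1] at h
    have := natDegree_rodA r n
    omega
  refine ⟨Q, hQ, hQdeg, ?_⟩
  have hc : Q.coeff n = (-1) ^ n * (2 * (r + n)).factorial / (n + 2 * r).factorial := by
    have h := congrArg (fun p => coeff p (2 * r + n)) hQ
    rw [coeff_mul_add_eq_of_natDegree_le (natDegree_one_add_X_pow _) hQdeg, coeff_top_one_add_X_pow,
      one_mul, coeff_iterate_derivative, show 2 * r + n + n = n + (n + 2 * r) by ring,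
      coeff_rodA] at h
    rw [← h, nsmul_eq_mul, eq_div_iff (by positivity)]
    have := Nat.factorial_mul_descFactorial (n := n + (n + 2 * r)) (k := n) (by omega)
    rw [Nat.add_sub_cancel_left] at this
    rw [show 2 * (r + n) = n + (n + 2 * r) by ring, ← this]
    push_cast
    ring
  have hdeg0 : (derivative^[n] Q).natDegree = 0 := by
    have := natDegree_iterate_derivative Q n
    omega
  rw [eq_C_of_natDegree_eq_zero hdeg0, coeff_iterate_derivative, zero_add,
    Nat.descFactorial_self, hc, nsmul_eq_mul]
  congr 1
  ring

lemma iterate_deriv_eval (n : ℕ) (p : ℝ[X]) :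
    deriv^[n] (fun x => p.eval x) = fun x => (derivative^[n] p).eval x := by
  induction n generalizing p with
  | zero => rfl
  | succ n ih =>
    rw [Function.iterate_succ_apply, Function.iterate_succ_apply, ← ih]
    congr 1
    ext x
    exact p.deriv

lemma legP_eq (r n : ℕ) (Q : ℝ[X]) (hQ : derivative^[n] (rodA r n) = (1 + X) ^ (2 * r) * Q)
    (z : ℝ) (hz : 1 + z ≠ 0) : legP (r + n) r z
      = (-1) ^ n / (2 ^ (r + n) * n.factorial) * ((1 + z) ^ r * Q.eval z) := by
  have h : (fun w : ℝ => (1 - w) ^ n * (1 + w) ^ (r + n + r)) = fun w => (rodA r n).eval w := by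
    ext w
    simp [rodA, show r + n + r = n + 2 * r by ring]
  rw [legP, Nat.add_sub_cancel_left, h, iterate_deriv_eval, hQ]
  simp only [eval_mul, eval_pow, eval_add, eval_one, eval_X]
  field_simp
  ring

/-- The product integral reduced, by integration by parts, to the weight `rodA r n` against the
`n`-th derivative of the other quotient polynomial. -/
lemma integral_legP_mul (r n m : ℕ) (Q : ℝ[X])
    (hQ : derivative^[m] (rodA r m) = (1 + X) ^ (2 * r) * Q) :
    ∫ z in (-1 : ℝ)..1, legP (r + n) r z * legP (r + m) r z
      = (-1) ^ n / (2 ^ (r + n) * n.factorial) * ((-1) ^ m / (2 ^ (r + m) * m.factorial)) *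
        ((-1) ^ n * ∫ z in (-1 : ℝ)..1, (rodA r n).eval z * (derivative^[n] Q).eval z) := by
  obtain ⟨R, hR, -⟩ := exists_rodQ r n
  have d1 : (X - C 1 : ℝ[X]) ^ n ∣ rodA r n := by
    refine Dvd.dvd.mul_right (pow_dvd_pow_of_dvd ⟨-1, ?_⟩ n) _
    simp
  have d2 : (X - C (-1) : ℝ[X]) ^ n ∣ rodA r n := by
    refine Dvd.dvd.mul_left ((pow_dvd_pow_of_dvd ⟨1, ?_⟩ n).trans
      (pow_dvd_pow _ (Nat.le_add_right n (2 * r)))) _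
    simp [add_comm]
  rw [← integral_iterate_derivative_mul n _ d1 d2, ← intervalIntegral.integral_const_mul]
  rw [intervalIntegral.integral_of_le (by norm_num), intervalIntegral.integral_of_le (by norm_num)]
  -- The half-open interval omits `z = -1`, where `legP` involves a division by zero.
  refine MeasureTheory.setIntegral_congr_fun measurableSet_Ioc fun z hz => ?_
  have hz' : 1 + z ≠ 0 := by linarith [hz.1]
  rw [legP_eq r n R hR z hz', legP_eq r m Q hQ z hz', hR]
  simp only [eval_mul, eval_pow, eval_add, eval_one, eval_X]
  ring

lemma integral_legP_of_lt (r n m : ℕ) (h : m < n) :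
    ∫ z in (-1 : ℝ)..1, legP (r + n) r z * legP (r + m) r z = 0 := by
  obtain ⟨Q, hQ, hdeg, -⟩ := exists_rodQ r m
  rw [integral_legP_mul r n m Q hQ, iterate_derivative_eq_zero (hdeg.trans_lt h)]
  simp

lemma integral_legP_self (r n : ℕ) :
    ∫ z in (-1 : ℝ)..1, legP (r + n) r z * legP (r + n) r z = 2 / (2 * ((r + n : ℕ) : ℝ) + 1) := by
  obtain ⟨Q, hQ, -, hC⟩ := exists_rodQ r n
  have hb := integral_one_sub_pow_mul_one_add_pow n (n + 2 * r)
  rw [integral_legP_mul r n n Q hQ, hC]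
  simp only [eval_C, intervalIntegral.integral_mul_const, rodA, eval_mul, eval_pow, eval_add,
    eval_sub, eval_one, eval_X]
  rw [hb, show n + (n + 2 * r) + 1 = 2 * (r + n) + 1 by ring, Nat.factorial_succ (2 * (r + n)),
    pow_succ, pow_mul']
  have hs : ((-1 : ℝ) ^ n) ^ 2 = 1 := by rw [← pow_mul, mul_comm, pow_mul]; simp
  have := Nat.factorial_ne_zero n
  have := Nat.factorial_ne_zero (n + 2 * r)
  have := Nat.factorial_ne_zero (2 * (r + n))
  have h2 : (2 : ℝ) ^ (r + n) ≠ 0 := by positivity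
  generalize (2 : ℝ) ^ (r + n) = t at *
  generalize (-1 : ℝ) ^ n = s at *
  push_cast
  have h3 : (2 * ((r : ℝ) + n) + 1) ≠ 0 := by positivity
  field_simp
  linear_combination (s ^ 2 + 1) * hs

theorem statement10 (r l l' : ℕ) (hl : r ≤ l) (hl' : r ≤ l') :
    ∫ z in (-1 : ℝ)..1, legP l r z * legP l' r z
      = if l = l' then 2 / (2 * (l : ℝ) + 1) else 0 := by
  obtain ⟨n, rfl⟩ := Nat.exists_eq_add_of_le hl
  obtain ⟨m, rfl⟩ := Nat.exists_eq_add_of_le hl'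
  rcases lt_trichotomy m n with h | rfl | h
  · rw [if_neg (by omega), integral_legP_of_lt r n m h]
  · rw [if_pos rfl, integral_legP_self]
  · rw [if_neg (by omega), ← integral_legP_of_lt r m n h]
    simp only [mul_comm]
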